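/- Let G be a countable discrete group acting continuously on a compact metric space (X,d), let {F_n} be a sequence of finite subsets of G satisfying lim_{n→∞} |F_n|/log n = ∞, and let K ⊆ X be non-empty and compact with h^B_top(K,{F_n}) > 0. Then for every s with 0 < s < h^B_top(K,{F_n}) there exists a Borel probability measure μ on X with μ(K) = 1 and h̲_μ^{loc}({F_n}) ≥ s; consequently h^B_top(K,{F_n}) ≤ sup{ h̲_μ^{loc}({F_n}) : μ a Borel probability measure with μ(K) = 1 }. -/

import Mathlib

open Filter Set MeasureTheory Topology ENNReal Pointwise

variable {G X : Type*}

section Defs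

variable [Group G] [MetricSpace X] [MulAction G X]

/-- The Bowen ball `B_F(x,ε) = {y : d(gx,gy) < ε for all g ∈ F}`. -/
def bowenBall (F : Finset G) (x : X) (ε : ℝ) : Set X :=
  {y : X | ∀ g ∈ F, dist (g • x) (g • y) < ε}

/-- A Følner sequence: `|F_n ∆ gF_n|/|F_n| → 0` for every `g ∈ G`. -/
def IsFolnerSeq (F : ℕ → Finset G) : Prop :=
  ∀ g : G, Tendsto
    (fun n => ((symmDiff (F n : Set G) ((g * ·) '' (F n : Set G))).ncard : ℝ) / (F n).card)
    atTop (𝓝 0)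

/-- A tempered sequence: `|⋃_{k<n} F_k⁻¹ F_n| ≤ C |F_n|` for all `n`. -/
def IsTemperedSeq (F : ℕ → Finset G) : Prop :=
  ∃ C : ℝ, 0 < C ∧ ∀ n : ℕ,
    ((⋃ k ∈ Finset.range n, ((F k : Set G)⁻¹ * (F n : Set G))).ncard : ℝ) ≤ C * (F n).card

/-- The growth condition `lim_n |F_n| / log n = ∞`. -/
def GrowthCond (F : ℕ → Finset G) : Prop :=
  Tendsto (fun n : ℕ => ((F n).card : ℝ) / Real.log n) atTop atTop

/-- `M(Z,N,ε,s,{F_n})`: infimum of `∑ exp(-s |F_{n_i}|)` over countable families of Bowen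
balls `B_{F_{n_i}}(x_i,ε)`, `n_i ≥ N`, covering `Z`. -/
noncomputable def ballM (F : ℕ → Finset G) (Z : Set X) (N : ℕ) (ε s : ℝ) : ℝ≥0∞ :=
  ⨅ (I : Set (X × ℕ)) (_ : I.Countable) (_ : ∀ p ∈ I, N ≤ p.2)
    (_ : Z ⊆ ⋃ p ∈ I, bowenBall (F p.2) p.1 ε),
    ∑' p : I, ENNReal.ofReal (Real.exp (-s * ((F (p : X × ℕ).2).card : ℝ)))

/-- `M(Z,ε,s,{F_n}) = lim_{N→∞} M(Z,N,ε,s,{F_n})` (the quantity is nondecreasing in `N`). -/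
noncomputable def ballMN (F : ℕ → Finset G) (Z : Set X) (ε s : ℝ) : ℝ≥0∞ :=
  ⨆ N : ℕ, ballM F Z N ε s

/-- `M(Z,s,{F_n}) = lim_{ε→0} M(Z,ε,s,{F_n})` (the quantity is nondecreasing as `ε` decreases). -/
noncomputable def ballMtot (F : ℕ → Finset G) (Z : Set X) (s : ℝ) : ℝ≥0∞ :=
  ⨆ (ε : ℝ) (_ : 0 < ε), ballMN F Z ε s

/-- The Bowen topological entropy of `Z` along `{F_n}`: the critical value of `s` at which
`M(Z,s,{F_n})` jumps from `+∞` to `0`, i.e. `inf {s : M(Z,s,{F_n}) = 0}`. -/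
noncomputable def bowenEnt (F : ℕ → Finset G) (Z : Set X) : ℝ≥0∞ :=
  ⨅ (s : ℝ) (_ : ballMtot F Z s = 0), ENNReal.ofReal s

/-- The weighted quantity `W(f,N,ε,s,{F_n})`. -/
noncomputable def wtW (F : ℕ → Finset G) (f : X → ℝ≥0∞) (N : ℕ) (ε s : ℝ) : ℝ≥0∞ :=
  ⨅ (I : Set (X × ℕ)) (c : X × ℕ → ℝ≥0∞) (_ : I.Countable)
    (_ : ∀ p ∈ I, N ≤ p.2 ∧ 0 < c p ∧ c p < ⊤)
    (_ : ∀ x : X, f x ≤ ∑' p : I, c (p : X × ℕ) *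
        (bowenBall (F (p : X × ℕ).2) (p : X × ℕ).1 ε).indicator (fun _ => (1 : ℝ≥0∞)) x),
    ∑' p : I, c (p : X × ℕ) * ENNReal.ofReal (Real.exp (-s * ((F (p : X × ℕ).2).card : ℝ)))

/-- `W(Z,N,ε,s,{F_n}) = W(χ_Z,N,ε,s,{F_n})`. -/
noncomputable def wtWset (F : ℕ → Finset G) (Z : Set X) (N : ℕ) (ε s : ℝ) : ℝ≥0∞ :=
  wtW F (Z.indicator fun _ => (1 : ℝ≥0∞)) N ε s

/-- `W(Z,ε,s,{F_n}) = lim_{N→∞} W(Z,N,ε,s,{F_n})`. -/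
noncomputable def wtWN (F : ℕ → Finset G) (Z : Set X) (ε s : ℝ) : ℝ≥0∞ :=
  ⨆ N : ℕ, wtWset F Z N ε s

/-- `W(Z,s,{F_n}) = lim_{ε→0} W(Z,ε,s,{F_n})`. -/
noncomputable def wtWtot (F : ℕ → Finset G) (Z : Set X) (s : ℝ) : ℝ≥0∞ :=
  ⨆ (ε : ℝ) (_ : 0 < ε), wtWN F Z ε s

/-- The weighted Bowen topological entropy of `Z` along `{F_n}`. -/
noncomputable def wtBowenEnt (F : ℕ → Finset G) (Z : Set X) : ℝ≥0∞ :=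
  ⨅ (s : ℝ) (_ : wtWtot F Z s = 0), ENNReal.ofReal s

/-- A finite open cover of `X`. -/
def IsFinOpenCover (𝒰 : Finset (Set X)) : Prop :=
  (∀ U ∈ 𝒰, IsOpen U) ∧ ⋃₀ (𝒰 : Set (Set X)) = Set.univ

/-- `N(⋁_{g∈F} g⁻¹𝒰)`: the minimal cardinality of a subcover of the refined cover, whose members
are the sets `X(𝐔) = ⋂_{g∈F} g⁻¹ U_g` with `U_g ∈ 𝒰`. -/
noncomputable def coverNum (𝒰 : Finset (Set X)) (F : Finset G) : ℕ :=
  sInf {k : ℕ | ∃ Λ : Finset (G → Set X), Λ.card = k ∧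
    (∀ u ∈ Λ, ∀ g ∈ F, u g ∈ 𝒰) ∧
    (⋃ u ∈ Λ, ⋂ g ∈ F, (fun y => g • y) ⁻¹' u g) = Set.univ}

/-- `h_top(G,𝒰) = lim_n (1/|F_n|) log N(⋁_{g∈F_n} g⁻¹𝒰)` (the limit exists by Ornstein–Weiss,
hence equals the `limsup`). -/
noncomputable def coverTopEnt (F : ℕ → Finset G) (𝒰 : Finset (Set X)) : ℝ :=
  limsup (fun n => Real.log (coverNum 𝒰 (F n)) / (F n).card) atTop

/-- The topological entropy `h_top(X,G)`, the supremum over finite open covers. -/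
noncomputable def topEnt (X : Type*) [MetricSpace X] [MulAction G X] (F : ℕ → Finset G) : ℝ≥0∞ :=
  ⨆ (𝒰 : Finset (Set X)) (_ : IsFinOpenCover 𝒰), ENNReal.ofReal (coverTopEnt F 𝒰)

/-- `M(Z,𝒰,N,s,{F_n})`: infimum of `∑_{𝐔∈Λ} exp(-s m(𝐔))` over collections
`Λ ⊆ ⋃_{j≥N} 𝒲_{F_j}(𝒰)` covering `Z`; an element `𝐔 ∈ 𝒲_{F_j}(𝒰)` is encoded as a pair
`(j, u)` with `u g ∈ 𝒰` for `g ∈ F_j` (and `u g = ∅` elsewhere), `X(𝐔) = ⋂_{g∈F_j} g⁻¹ (u g)`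
and `m(𝐔) = |F_j|`. -/
noncomputable def covM (F : ℕ → Finset G) (𝒰 : Finset (Set X)) (Z : Set X) (N : ℕ) (s : ℝ) :
    ℝ≥0∞ :=
  ⨅ (Λ : Set (ℕ × (G → Set X)))
    (_ : ∀ p ∈ Λ, N ≤ p.1 ∧ (∀ g ∈ F p.1, p.2 g ∈ 𝒰) ∧ (∀ g ∉ F p.1, p.2 g = ∅))
    (_ : Z ⊆ ⋃ p ∈ Λ, ⋂ g ∈ F p.1, (fun y => g • y) ⁻¹' p.2 g),
    ∑' p : Λ, ENNReal.ofReal (Real.exp (-s * ((F (p : ℕ × (G → Set X)).1).card : ℝ)))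

/-- `M(Z,𝒰,s,{F_n}) = lim_{N→∞} M(Z,𝒰,N,s,{F_n})`. -/
noncomputable def covMtot (F : ℕ → Finset G) (𝒰 : Finset (Set X)) (Z : Set X) (s : ℝ) : ℝ≥0∞ :=
  ⨆ N : ℕ, covM F 𝒰 Z N s

/-- The cover-based Bowen topological entropy `h^B_top(𝒰,Z,{F_n}) = inf {s : M(Z,𝒰,s,{F_n}) = 0}`. -/
noncomputable def covBowenEnt (F : ℕ → Finset G) (𝒰 : Finset (Set X)) (Z : Set X) : ℝ≥0∞ :=
  ⨅ (s : ℝ) (_ : covMtot F 𝒰 Z s = 0), ENNReal.ofReal s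

/-- `diam(𝒰) = max {diam U : U ∈ 𝒰}`. -/
noncomputable def coverDiam (𝒰 : Finset (Set X)) : ℝ≥0∞ :=
  ⨆ U ∈ 𝒰, EMetric.diam U

end Defs

section MeasureDefs

variable [Group G] [MetricSpace X] [MulAction G X] [MeasurableSpace X]

/-- The quantity `-(1/m) log μ(B)`, with value `+∞` when `μ B = 0`. -/
noncomputable def locTerm (μ : Measure X) (B : Set X) (m : ℕ) : ℝ≥0∞ :=
  if μ B = 0 then ⊤ else ENNReal.ofReal (-(Real.log ((μ B).toReal)) / (m : ℝ))

/-- The lower local entropy `h̲_μ^{loc}(x,ε,{F_n}) = liminf_n -(1/|F_n|) log μ(B_{F_n}(x,ε))`. -/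
noncomputable def lowLoc (μ : Measure X) (F : ℕ → Finset G) (x : X) (ε : ℝ) : ℝ≥0∞ :=
  liminf (fun n => locTerm μ (bowenBall (F n) x ε) (F n).card) atTop

/-- The upper local entropy `limsup_n -(1/|F_n|) log μ(B_{F_n}(x,ε))`. -/
noncomputable def upLoc (μ : Measure X) (F : ℕ → Finset G) (x : X) (ε : ℝ) : ℝ≥0∞ :=
  limsup (fun n => locTerm μ (bowenBall (F n) x ε) (F n).card) atTop

/-- `h̲_μ^{loc}(x,{F_n}) = lim_{ε→0} h̲_μ^{loc}(x,ε,{F_n})` (a monotone limit, i.e. the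
supremum over `ε > 0`). -/
noncomputable def lowLocPt (μ : Measure X) (F : ℕ → Finset G) (x : X) : ℝ≥0∞ :=
  ⨆ (ε : ℝ) (_ : 0 < ε), lowLoc μ F x ε

/-- `h̲_μ^{loc}({F_n}) = ∫_X h̲_μ^{loc}(x,{F_n}) dμ(x)`. -/
noncomputable def lowLocEnt (μ : Measure X) (F : ℕ → Finset G) : ℝ≥0∞ :=
  ∫⁻ x, lowLocPt μ F x ∂μ

/-- A finite measurable partition of `X`, presented as `P : Fin k → Set X`. -/
def IsMeasPartition {k : ℕ} (P : Fin k → Set X) : Prop :=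
  (∀ i, MeasurableSet (P i)) ∧ Pairwise (Function.onFun Disjoint P) ∧ (⋃ i, P i) = Set.univ

/-- The static entropy `H_μ(𝒫_F)` of the join `𝒫_F = ⋁_{g∈F} g⁻¹𝒫`; its atoms are the
nonempty sets `⋂_{g∈F} g⁻¹ P(u g)` (distinct choices `u` yield disjoint atoms, and empty
atoms contribute `0`). -/
noncomputable def partH (μ : Measure X) {k : ℕ} (P : Fin k → Set X) (F : Finset G) : ℝ :=
  letI := Classical.decEq G
  ∑ u : (↥F → Fin k),
    Real.negMulLog ((μ (⋂ g : ↥F, (fun y => (g : G) • y) ⁻¹' P (u g))).toReal)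

/-- `h_μ(G,𝒫) = liminf_n (1/|F_n|) H_μ(𝒫_{F_n})`. -/
noncomputable def partEnt (μ : Measure X) (F : ℕ → Finset G) {k : ℕ} (P : Fin k → Set X) : ℝ :=
  liminf (fun n => partH μ P (F n) / (F n).card) atTop

/-- The measure-theoretic entropy `h_μ(X,G) = sup_𝒫 h_μ(G,𝒫)` (it is independent of the
Følner sequence used to compute it). -/
noncomputable def measEnt (μ : Measure X) (F : ℕ → Finset G) : ℝ≥0∞ :=
  ⨆ (k : ℕ) (P : Fin k → Set X) (_ : IsMeasPartition P), ENNReal.ofReal (partEnt μ F P)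

/-- Ergodicity of the `G`-action w.r.t. `μ`. -/
def IsErgodicGAction (G : Type*) [Group G] [MulAction G X] (μ : Measure X) : Prop :=
  ∀ A : Set X, MeasurableSet A → (∀ g : G, (g • ·) ⁻¹' A = A) → μ A = 0 ∨ μ A = 1

end MeasureDefs

/-!
A weighted cover of `K` by `ε`-balls yields a cover by `2ε`-balls. If `∑ tₙ = 1`, then each point of
`K` receives weight at least `tₙ` from the balls of some level `n`, and a maximal `2ε`-separated
subset of the points receiving weight `tₙ` at level `n` has at most (weight of level `n`) / `tₙ`
elements, because an `ε`-ball contains at most one of them. With `tₙ` proportional to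
`exp (-(s' - s) |Fₙ|)`, which is summable by the growth condition, this gives
`M(K, N, 2ε, s') ≤ S · W(K, N, ε, s)`.

If `s'` is below the entropy of `K`, then `W(K, N, ε, s) ≥ C > 0` for suitable `N` and `ε`: no
weighted cover costs less than `C`. By duality, every finite family of Bowen balls admits a finitely
supported probability measure on `K` with `μ (B_{Fₙ}(x, ε)) ≤ exp (-s |Fₙ|) / C` for all its
members, and weak-* compactness of the probability measures on `K` provides one `μ` for all `x` and
all `n ≥ N`.
-/

section CoverDuality

open scoped NNReal

variable {ι Y : Type*}

theorem exists_mem_le_of_forall_one_le_dotProduct [Fintype ι] {S : Set (ι → ℝ)}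
    (hS : Convex ℝ S) (hSc : IsCompact S) {a : ι → ℝ} (ha : 0 ≤ a)
    (h : ∀ c : ι → ℝ, 0 ≤ c → (∀ v ∈ S, 1 ≤ c ⬝ᵥ v) → 1 ≤ c ⬝ᵥ a) :
    ∃ v ∈ S, v ≤ a := by
  classical
  by_contra! hdisj
  obtain ⟨f, u, u', hfa, huu', hfS⟩ := geometric_hahn_banach_closed_compact
    (convex_Iic a) isClosed_Iic hS hSc (disjoint_left.2 fun v hva hvS => hdisj v hvS hva)
  let c : ι → ℝ := fun i => f (Pi.single i 1)
  have hfc (v : ι → ℝ) : f v = c ⬝ᵥ v := by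
    conv_lhs => rw [pi_eq_sum_univ' v]
    simp [c, dotProduct, mul_comm]
  have hu : 0 < u := by simpa using hfa 0 ha
  have hau : f a < u := hfa a self_mem_Iic
  have hc : 0 ≤ c := by
    intro i
    by_contra! hci
    change c i < 0 at hci
    -- `t` is the time at which `f` reaches `u` on the ray from `a` in direction `-eᵢ`.
    let t : ℝ := (u - f a) / -c i
    have ht : 0 ≤ t := div_nonneg (sub_nonneg.2 hau.le) (neg_nonneg.2 hci.le)
    have hmem : a - t • Pi.single i 1 ∈ Iic a :=
      sub_le_self a (smul_nonneg ht (Pi.single_nonneg.2 zero_le_one))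
    have hlt : f a - t * c i < u := by simpa [c] using hfa _ hmem
    have htc : t * c i = -(u - f a) := by
      have := hci.ne
      simp only [t]
      field_simp
    linarith
  have hcover (v) (hv : v ∈ S) : 1 ≤ (u⁻¹ • c) ⬝ᵥ v := by
    rw [smul_dotProduct, ← hfc, smul_eq_mul, ← div_eq_inv_mul, one_le_div hu]
    exact (huu'.trans (hfS v hv)).le
  have hcost := h (u⁻¹ • c) (smul_nonneg (inv_nonneg.2 hu.le) hc) hcover
  rw [smul_dotProduct, ← hfc, smul_eq_mul, ← div_eq_inv_mul, one_le_div hu] at hcost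
  exact hau.not_ge hcost

theorem exists_measureReal_eq_of_mem_convexHull_indicator [MeasurableSpace Y] {B : ι → Set Y}
    (hB : ∀ i, MeasurableSet (B i)) {v : ι → ℝ}
    (hv : v ∈ convexHull ℝ (range fun y i => (B i).indicator (fun _ => (1 : ℝ)) y)) :
    ∃ μ : Measure Y, IsProbabilityMeasure μ ∧ ∀ i, μ.real (B i) = v i := by
  obtain ⟨κ, _, w, z, hw, hw1, hz, rfl⟩ := mem_convexHull_iff_exists_fintype.1 hv
  choose y hy using hz
  refine ⟨∑ k, ENNReal.ofReal (w k) • Measure.dirac (y k), ⟨?_⟩, fun i => ?_⟩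
  · simp [← ENNReal.ofReal_sum_of_nonneg fun k _ => hw k, hw1]
  · have hterm (k : κ) : ENNReal.ofReal (w k) * (B i).indicator 1 (y k) =
        ENNReal.ofReal (w k * z k i) := by
      by_cases hk : y k ∈ B i <;> simp [← hy, hk]
    have hnonneg (k : κ) : 0 ≤ w k * z k i := by
      rw [← hy]
      exact mul_nonneg (hw k) (indicator_nonneg (fun _ _ => zero_le_one) _)
    simp [measureReal_def, hB i, hterm, ← ENNReal.ofReal_sum_of_nonneg fun k _ => hnonneg k,
      Finset.sum_nonneg fun k _ => hnonneg k]

theorem exists_isProbabilityMeasure_forall_mem_measure_le [MeasurableSpace Y] {B : ι → Set Y}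
    (J : Finset ι) (hB : ∀ i ∈ J, MeasurableSet (B i)) {a : ι → ℝ≥0}
    (h : ∀ c : ι → ℝ≥0, (∀ y, 1 ≤ ∑ i ∈ J, c i * (B i).indicator (fun _ => 1) y) →
      1 ≤ ∑ i ∈ J, c i * a i) :
    ∃ μ : Measure Y, IsProbabilityMeasure μ ∧ ∀ i ∈ J, μ (B i) ≤ a i := by
  classical
  let φ : Y → J → ℝ := fun y i => (B i).indicator (fun _ => (1 : ℝ)) y
  have hφ : (range φ).Finite := by
    refine (Set.Finite.pi' fun _ : J => (Set.toFinite {(0 : ℝ), 1})).subset ?_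
    rintro _ ⟨y, rfl⟩ i
    by_cases hy : y ∈ B i <;> simp [φ, hy]
  have hdual (c : J → ℝ) (hc : 0 ≤ c) (hcov : ∀ v ∈ convexHull ℝ (range φ), 1 ≤ c ⬝ᵥ v) :
      1 ≤ c ⬝ᵥ fun i : J => (a i : ℝ) := by
    let c' : ι → ℝ≥0 := fun i => if hi : i ∈ J then (c ⟨i, hi⟩).toNNReal else 0
    have hdot (v : ι → ℝ≥0) : c ⬝ᵥ (fun i : J => (v i : ℝ)) = ↑(∑ i ∈ J, c' i * v i) := by
      rw [← Finset.sum_coe_sort]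
      simp [c', dotProduct, Real.coe_toNNReal _ (hc _), -Real.coe_toNNReal']
    have hφ_dot (y : Y) : c ⬝ᵥ φ y = ↑(∑ i ∈ J, c' i * (B i).indicator (fun _ => 1) y) := by
      simp [← hdot, φ, NNReal.coe_indicator]
    rw [hdot]
    refine mod_cast h c' fun y => ?_
    have := hcov _ (subset_convexHull ℝ _ (mem_range_self y))
    rwa [hφ_dot, NNReal.one_le_coe] at this
  obtain ⟨v, hv, hva⟩ := exists_mem_le_of_forall_one_le_dotProduct (convex_convexHull ℝ (range φ))
    (hφ.isCompact_convexHull ℝ) (fun i => (a i).2) hdual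
  obtain ⟨μ, hμ, hμv⟩ := exists_measureReal_eq_of_mem_convexHull_indicator
    (fun i : J => hB i i.2) hv
  refine ⟨μ, hμ, fun i hi => ?_⟩
  rw [← ofReal_measureReal, hμv ⟨i, hi⟩, ← ENNReal.ofReal_coe_nnreal]
  exact ENNReal.ofReal_le_ofReal (hva ⟨i, hi⟩)

theorem isClosed_setOf_measure_le_of_isOpen [TopologicalSpace Y] [HasOuterApproxClosed Y]
    [MeasurableSpace Y] [OpensMeasurableSpace Y] {U : Set Y} (hU : IsOpen U) (r : ℝ≥0∞) :
    IsClosed {μ : ProbabilityMeasure Y | (μ : Measure Y) U ≤ r} :=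
  isClosed_iff_forall_filter.2 fun _ _ _ hl hlμ =>
    (ProbabilityMeasure.le_liminf_measure_open_of_tendsto hlμ hU).trans <|
      liminf_le_of_frequently_le' (Eventually.frequently (hl (mem_principal_self _)))

theorem exists_isProbabilityMeasure_forall_measure_le [TopologicalSpace Y] [CompactSpace Y]
    [T2Space Y] [HasOuterApproxClosed Y] [MeasurableSpace Y] [BorelSpace Y] {B : ι → Set Y}
    {I : Set ι} (hB : ∀ i ∈ I, IsOpen (B i)) {a : ι → ℝ≥0}
    (h : ∀ (J : Finset ι), ↑J ⊆ I → ∀ (c : ι → ℝ≥0),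
      (∀ y, 1 ≤ ∑ i ∈ J, c i * (B i).indicator (fun _ => 1) y) → 1 ≤ ∑ i ∈ J, c i * a i) :
    ∃ μ : Measure Y, IsProbabilityMeasure μ ∧ ∀ i ∈ I, μ (B i) ≤ a i := by
  classical
  have hfin (J : Finset I) :
      (univ ∩ ⋂ i ∈ J, {μ : ProbabilityMeasure Y | (μ : Measure Y) (B i) ≤ a i}).Nonempty := by
    let J' : Finset ι := J.map (Function.Embedding.subtype (· ∈ I))
    have hJI : ↑J' ⊆ I := by simp [J']
    obtain ⟨μ, hμ, hμJ⟩ := exists_isProbabilityMeasure_forall_mem_measure_le J'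
      (fun i hi => (hB i (hJI hi)).measurableSet) (h J' hJI)
    exact ⟨⟨μ, hμ⟩, mem_univ _,
      mem_iInter₂.2 fun i hi => hμJ i (Finset.mem_map_of_mem _ hi)⟩
  obtain ⟨μ, -, hμ⟩ := isCompact_univ.inter_iInter_nonempty _
    (fun i : I => isClosed_setOf_measure_le_of_isOpen (hB i i.2) (a i)) hfin
  exact ⟨μ, inferInstance, fun i hi => mem_iInter.1 hμ ⟨i, hi⟩⟩

end CoverDuality

section SeparatedSets

variable {ι α : Type*}

theorem encard_mul_le_tsum_of_isSeparated {R : SetRel α α} {B : ι → Set α}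
    (hB : ∀ i, B i ×ˢ B i ⊆ R) {c : ι → ℝ≥0∞} {t : ℝ≥0∞} {T : Set α} (hT : R.IsSeparated T)
    (ht : ∀ x ∈ T, t ≤ ∑' i, c i * (B i).indicator (fun _ => 1) x) :
    T.encard * t ≤ ∑' i, c i := by
  have hone (i : ι) : ∑' x : T, (B i).indicator (fun _ => (1 : ℝ≥0∞)) x ≤ 1 := by
    have hsub : (T ∩ B i).Subsingleton := fun x hx y hy =>
      hT.eq hx.1 hy.1 <| not_not.2 <| hB i ⟨hx.2, hy.2⟩
    rw [tsum_subtype, indicator_indicator, ← tsum_subtype (T ∩ B i), ENNReal.tsum_set_one]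
    exact mod_cast encard_le_one_iff_subsingleton.2 hsub
  calc T.encard * t
      = ∑' _ : T, t := (ENNReal.tsum_set_const T t).symm
    _ ≤ ∑' x : T, ∑' i, c i * (B i).indicator (fun _ => 1) (x : α) :=
      ENNReal.tsum_le_tsum fun x => ht x x.2
    _ = ∑' i, c i * ∑' x : T, (B i).indicator (fun _ => 1) (x : α) := by
      rw [ENNReal.tsum_comm]
      simp_rw [ENNReal.tsum_mul_left]
    _ ≤ ∑' i, c i := ENNReal.tsum_le_tsum fun i => mul_le_of_le_one_right' (hone i)

theorem exists_maximal_isSeparated (R : SetRel α α) (Z : Set α) :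
    ∃ T, Maximal (fun T => T ⊆ Z ∧ R.IsSeparated T) T :=
  zorn_subset {T | T ⊆ Z ∧ R.IsSeparated T} fun C hC hchain =>
    ⟨⋃₀ C, ⟨sUnion_subset fun _ hT => (hC hT).1,
      (pairwise_sUnion hchain.directedOn).2 fun _ hT => (hC hT).2⟩,
      fun _ => subset_sUnion_of_mem⟩

theorem exists_isCover_encard_mul_le_tsum (R : SetRel α α) [R.IsRefl] [R.IsSymm]
    {B : ι → Set α} (hB : ∀ i, B i ×ˢ B i ⊆ R) (c : ι → ℝ≥0∞) (t : ℝ≥0∞) :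
    ∃ T, R.IsCover {x | t ≤ ∑' i, c i * (B i).indicator (fun _ => 1) x} T ∧
      T.encard * t ≤ ∑' i, c i :=
  let ⟨T, hT⟩ := exists_maximal_isSeparated R _
  ⟨T, .of_maximal_isSeparated hT, encard_mul_le_tsum_of_isSeparated hB hT.1.2 hT.1.1⟩

theorem exists_le_of_tsum_le_tsum [Nonempty ι] {f g : ι → ℝ≥0∞} (hfg : ∑' i, f i ≤ ∑' i, g i)
    (hf : ∑' i, f i ≠ ⊤) : ∃ i, f i ≤ g i := by
  by_contra! hlt
  refine hfg.not_gt (ENNReal.tsum_lt_tsum (ne_top_of_le_ne_top hf ?_) (fun i => (hlt i).le)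
    (hlt (Classical.arbitrary ι)))
  exact ENNReal.tsum_le_tsum fun i => (hlt i).le

end SeparatedSets

section BowenBall

variable [Group G] [MetricSpace X] [MulAction G X] {A : Finset G} {x y z : X} {ε : ℝ}

theorem mem_bowenBall_comm : x ∈ bowenBall A y ε ↔ y ∈ bowenBall A x ε := by
  simp only [bowenBall, mem_ofPred_eq, dist_comm]

theorem mem_bowenBall_self (hε : 0 < ε) : x ∈ bowenBall A x ε := fun _ _ => by simpa

theorem mem_bowenBall_two_mul (hx : x ∈ bowenBall A z ε) (hy : y ∈ bowenBall A z ε) :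
    x ∈ bowenBall A y (2 * ε) := fun g hg => by
  linarith [hx g hg, hy g hg, dist_triangle_left (g • y) (g • x) (g • z)]

theorem isOpen_bowenBall [ContinuousConstSMul G X] : IsOpen (bowenBall A x ε) := by
  simp only [bowenBall, ofPred_forall]
  exact isOpen_biInter_finset fun g _ =>
    isOpen_lt (continuous_const.dist (continuous_const_smul g)) continuous_const

theorem exists_subset_iUnion_bowenBall_encard_mul_le_tsum {ι : Type*} (A : Finset G) (hε : 0 < ε)
    (ctr : ι → X) (c : ι → ℝ≥0∞) (t : ℝ≥0∞) :
    ∃ T : Set X,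
      {x | t ≤ ∑' i, c i * (bowenBall A (ctr i) ε).indicator (fun _ => 1) x} ⊆
        ⋃ y ∈ T, bowenBall A y (2 * ε) ∧
      T.encard * t ≤ ∑' i, c i := by
  let R : SetRel X X := {p | p.1 ∈ bowenBall A p.2 (2 * ε)}
  have : R.IsRefl := ⟨fun _ => mem_bowenBall_self (by positivity)⟩
  have : R.IsSymm := ⟨fun _ _ => mem_bowenBall_comm.1⟩
  obtain ⟨T, hcov, hcard⟩ := exists_isCover_encard_mul_le_tsum R
    (B := fun i => bowenBall A (ctr i) ε)
    (fun i p hp => mem_bowenBall_two_mul hp.1 hp.2) c t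
  exact ⟨T, fun x hx => mem_iUnion₂.2 (by simpa [R] using hcov hx), hcard⟩

end BowenBall

section WeightedCover

variable [Group G] [MetricSpace X] [MulAction G X] {F : ℕ → Finset G} {K : Set X} {N : ℕ}
  {ε s s' : ℝ}

theorem ballM_le_tsum_encard_mul {T : ℕ → Set X} (hTN : ∀ n < N, T n = ∅)
    (hcov : K ⊆ ⋃ n, ⋃ y ∈ T n, bowenBall (F n) y ε) :
    ballM F K N ε s ≤
      ∑' n, (T n).encard * ENNReal.ofReal (Real.exp (-s * (F n).card)) := by
  by_cases hfin : ∀ n, (T n).Finite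
  · let I : Set (X × ℕ) := {p | p.1 ∈ T p.2}
    have hI : I.Countable := by
      have : I = ⋃ n, (·, n) '' T n := by ext ⟨x, n⟩; simp [I]
      exact this ▸ countable_iUnion fun n => (hfin n).countable.image _
    have hIN : ∀ p ∈ I, N ≤ p.2 := fun p hp => by
      by_contra! hlt
      simp [I, hTN _ hlt] at hp
    have hIcov : K ⊆ ⋃ p ∈ I, bowenBall (F p.2) p.1 ε := fun x hx => by
      simpa [I, @exists_comm ℕ] using hcov hx
    calc ballM F K N ε s
        ≤ ∑' p : I, ENNReal.ofReal (Real.exp (-s * (F (p : X × ℕ).2).card)) :=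
          iInf₂_le_of_le I hI (iInf₂_le hIN hIcov)
      _ = ∑' n, ∑' _ : T n, ENNReal.ofReal (Real.exp (-s * (F n).card)) := by
          rw [tsum_subtype I fun p => ENNReal.ofReal (Real.exp (-s * (F p.2).card)),
            ENNReal.tsum_prod', ENNReal.tsum_comm]
          refine tsum_congr fun n => ?_
          rw [tsum_subtype (T n) fun _ => ENNReal.ofReal (Real.exp (-s * (F n).card))]
          rfl
      _ = _ := by simp_rw [ENNReal.tsum_set_const]
  · push Not at hfin
    obtain ⟨n, hn⟩ := hfin
    refine le_top.trans_eq (ENNReal.tsum_eq_top_of_eq_top ⟨n, ?_⟩).symm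
    simp [Infinite.encard_eq hn, ENNReal.top_mul, Real.exp_pos]

theorem ballM_two_mul_le_mul_tsum (hε : 0 < ε)
    (hS : ∑' n, ENNReal.ofReal (Real.exp (-(s' - s) * (F n).card)) ≠ ⊤) {c : X → ℕ → ℝ≥0∞}
    (hcN : ∀ z, ∀ n < N, c z n = 0)
    (hcov : ∀ x ∈ K, 1 ≤ ∑' n, ∑' z, c z n * (bowenBall (F n) z ε).indicator (fun _ => 1) x) :
    ballM F K N (2 * ε) s' ≤ (∑' n, ENNReal.ofReal (Real.exp (-(s' - s) * (F n).card))) *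
      ∑' n, ∑' z, c z n * ENNReal.ofReal (Real.exp (-s * (F n).card)) := by
  set a : ℕ → ℝ≥0∞ := fun n => ENNReal.ofReal (Real.exp (-(s' - s) * (F n).card))
  set S := ∑' n, a n
  have hapos (n : ℕ) : 0 < a n := ENNReal.ofReal_pos.2 (Real.exp_pos _)
  have hS0 : S ≠ 0 := fun h => (hapos 0).ne' (ENNReal.tsum_eq_zero.1 h 0)
  choose T hTcov hTcard using fun n => exists_subset_iUnion_bowenBall_encard_mul_le_tsum
    (F n) hε id (fun z => c z n) (a n / S)
  have hTN : ∀ n < N, T n = ∅ := fun n hn => by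
    have h0 : (T n).encard * (a n / S) ≤ 0 := by simpa [hcN _ n hn] using hTcard n
    simpa [ENNReal.div_eq_zero_iff, (hapos n).ne', hS] using h0
  have hKT : K ⊆ ⋃ n, ⋃ y ∈ T n, bowenBall (F n) y (2 * ε) := fun x hx => by
    have hsum : ∑' n, a n / S = 1 := by
      simp_rw [div_eq_mul_inv, ENNReal.tsum_mul_right]
      exact ENNReal.mul_inv_cancel hS0 hS
    obtain ⟨n, hn⟩ := exists_le_of_tsum_le_tsum (hsum.trans_le (hcov x hx)) (by simp [hsum])
    exact mem_iUnion.2 ⟨n, hTcov n hn⟩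
  calc ballM F K N (2 * ε) s'
      ≤ ∑' n, (T n).encard * ENNReal.ofReal (Real.exp (-s' * (F n).card)) :=
        ballM_le_tsum_encard_mul hTN hKT
    _ = ∑' n, S * ((T n).encard * (a n / S) * ENNReal.ofReal (Real.exp (-s * (F n).card))) := by
        refine tsum_congr fun n => ?_
        have hexp : ENNReal.ofReal (Real.exp (-s' * (F n).card)) =
            a n * ENNReal.ofReal (Real.exp (-s * (F n).card)) := by
          rw [← ENNReal.ofReal_mul (Real.exp_pos _).le, ← Real.exp_add]
          ring_nf
        rw [hexp]
        nth_rw 1 [← ENNReal.mul_div_cancel hS0 hS (b := a n)]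
        ring
    _ ≤ ∑' n, S * ((∑' z, c z n) * ENNReal.ofReal (Real.exp (-s * (F n).card))) := by
        gcongr with n
        exact hTcard n
    _ = S * ∑' n, ∑' z, c z n * ENNReal.ofReal (Real.exp (-s * (F n).card)) := by
        simp_rw [ENNReal.tsum_mul_left, ENNReal.tsum_mul_right]

theorem ballM_two_mul_le_mul_wtWset (hε : 0 < ε)
    (hS : ∑' n, ENNReal.ofReal (Real.exp (-(s' - s) * (F n).card)) ≠ ⊤) :
    ballM F K N (2 * ε) s' ≤ (∑' n, ENNReal.ofReal (Real.exp (-(s' - s) * (F n).card))) *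
      wtWset F K N ε s := by
  have hS0 : ∑' n, ENNReal.ofReal (Real.exp (-(s' - s) * (F n).card)) ≠ 0 := fun h => by
    simpa [(Real.exp_pos _).not_ge] using ENNReal.tsum_eq_zero.1 h 0
  rw [← ENNReal.div_le_iff' hS0 hS]
  refine le_iInf₂ fun I c => le_iInf₂ fun _ hI => le_iInf fun hcov => ?_
  rw [ENNReal.div_le_iff' hS0 hS]
  let c' : X → ℕ → ℝ≥0∞ := fun z n => I.indicator c (z, n)
  have hsum (f : X → ℕ → ℝ≥0∞) :
      ∑' p : I, c p * f (p : X × ℕ).1 (p : X × ℕ).2 = ∑' n, ∑' z, c' z n * f z n := by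
    rw [tsum_subtype I fun p => c p * f p.1 p.2, ENNReal.tsum_prod', ENNReal.tsum_comm]
    simp only [c', indicator_mul_left]
  rw [hsum fun _ n => ENNReal.ofReal (Real.exp (-s * (F n).card))]
  refine ballM_two_mul_le_mul_tsum hε hS (fun z n hn => ?_) fun x hx => ?_
  · exact indicator_of_notMem (fun h => hn.not_ge (hI _ h).1) _
  · simpa [hx, hsum fun z n => (bowenBall (F n) z ε).indicator (fun _ => 1) x] using hcov x

end WeightedCover

section Frostman

open scoped NNReal

variable [Group G] [MetricSpace X] [MulAction G X] {F : ℕ → Finset G} {K : Set X} {N : ℕ}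
  {ε s : ℝ}

theorem wtWset_le_sum {J : Finset (X × ℕ)} (hJ : ∀ p ∈ J, N ≤ p.2) {c : X × ℕ → ℝ≥0}
    (hcov : ∀ x ∈ K, 1 ≤ ∑ p ∈ J, c p * (bowenBall (F p.2) p.1 ε).indicator (fun _ => 1) x) :
    wtWset F K N ε s ≤ ∑ p ∈ J, c p * (Real.exp (-s * (F p.2).card)).toNNReal := by
  classical
  let I : Finset (X × ℕ) := {p ∈ J | c p ≠ 0}
  have hsum (f : X × ℕ → ℝ≥0) :
      ∑' p : (I : Set (X × ℕ)), (c p : ℝ≥0∞) * f p = ↑(∑ p ∈ J, c p * f p) := by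
    rw [Finset.tsum_subtype' I fun p => (c p : ℝ≥0∞) * f p,
      Finset.sum_filter_of_ne fun p _ => ?_]
    · simp
    · exact fun h hc => h (by simp [hc])
  refine (iInf₂_le_of_le (I : Set (X × ℕ)) (fun p => (c p : ℝ≥0∞))
    (iInf₂_le_of_le I.countable_toSet (fun p hp => ?_) (iInf_le_of_le (fun x => ?_) le_rfl))).trans
    (hsum _).le
  · have hp := Finset.mem_filter.1 hp
    exact ⟨hJ p hp.1, by simpa [pos_iff_ne_zero] using hp.2, ENNReal.coe_lt_top⟩
  · have hind (p : X × ℕ) : (bowenBall (F p.2) p.1 ε).indicator (fun _ => (1 : ℝ≥0∞)) x =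
        ↑((bowenBall (F p.2) p.1 ε).indicator (fun _ => (1 : ℝ≥0)) x) := by
      by_cases h : x ∈ bowenBall (F p.2) p.1 ε <;> simp [h]
    simp_rw [hind]
    rw [hsum fun p => (bowenBall (F p.2) p.1 ε).indicator (fun _ => 1) x]
    by_cases hx : x ∈ K
    · simpa only [indicator_of_mem hx, ENNReal.one_le_coe_iff] using hcov x hx
    · simp [hx]

theorem exists_isProbabilityMeasure_forall_measure_bowenBall_le [ContinuousConstSMul G X]
    [MeasurableSpace X] [BorelSpace X] (hK : IsCompact K) {C : ℝ≥0} (hC : C ≠ 0)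
    (hW : C ≤ wtWset F K N ε s) :
    ∃ μ : Measure X, IsProbabilityMeasure μ ∧ μ K = 1 ∧ ∀ x, ∀ n ≥ N,
      μ (bowenBall (F n) x ε) ≤ ENNReal.ofReal (Real.exp (-s * (F n).card)) / C := by
  have : CompactSpace K := isCompact_iff_compactSpace.1 hK
  let a : X × ℕ → ℝ≥0 := fun p => (Real.exp (-s * (F p.2).card)).toNNReal / C
  obtain ⟨ν, hν, hνB⟩ := exists_isProbabilityMeasure_forall_measure_le (Y := K)
    (B := fun p : X × ℕ => Subtype.val ⁻¹' bowenBall (F p.2) p.1 ε) (I := {p | N ≤ p.2})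
    (fun p _ => isOpen_bowenBall.preimage continuous_subtype_val) (a := a)
    fun J hJ c hcov => by
      have hcost := hW.trans (wtWset_le_sum hJ (c := c) fun x hx => hcov ⟨x, hx⟩)
      simp only [a, mul_div_assoc', ← Finset.sum_div]
      exact (one_le_div₀ (pos_iff_ne_zero.2 hC)).2 (mod_cast hcost)
  have hval : Measurable (Subtype.val : K → X) := measurable_subtype_coe
  refine ⟨ν.map Subtype.val, Measure.isProbabilityMeasure_map hval.aemeasurable, ?_,
    fun x n hn => ?_⟩
  · simp [Measure.map_apply hval hK.measurableSet]
  · rw [Measure.map_apply hval isOpen_bowenBall.measurableSet]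
    simpa [a, ENNReal.coe_div hC, ENNReal.ofReal] using hνB (x, n) hn

end Frostman

section Growth

variable {F : ℕ → Finset G}

theorem GrowthCond.summable_exp_neg_mul_card (hF : GrowthCond F) {δ : ℝ} (hδ : 0 < δ) :
    Summable fun n => Real.exp (-δ * (F n).card) := by
  have hsq : Summable fun n : ℕ => ((n : ℝ) ^ 2)⁻¹ := Real.summable_nat_pow_inv.2 one_lt_two
  refine hsq.of_norm_bounded_eventually_nat ?_
  filter_upwards [hF.eventually_ge_atTop (2 / δ), eventually_gt_atTop 1] with n hcard hn
  have hn0 : (0 : ℝ) < n := mod_cast zero_lt_one.trans hn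
  have hlog : 0 < Real.log n := Real.log_pos (mod_cast hn)
  have hδcard : 2 * Real.log n ≤ δ * (F n).card := by
    rw [div_le_div_iff₀ hδ hlog] at hcard
    linarith
  calc ‖Real.exp (-δ * (F n).card)‖
      = Real.exp (-(δ * (F n).card)) := by rw [Real.norm_of_nonneg (Real.exp_pos _).le, neg_mul]
    _ ≤ Real.exp (-(2 * Real.log n)) := by gcongr
    _ = ((n : ℝ) ^ 2)⁻¹ := by
      rw [Real.exp_neg, mul_comm, Real.exp_mul, Real.exp_log hn0, Real.rpow_two]

theorem tendsto_card_atTop_of_summable_exp {δ : ℝ} (hδ : 0 < δ)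
    (hF : Summable fun n => Real.exp (-δ * (F n).card)) :
    Tendsto (fun n => ((F n).card : ℝ)) atTop atTop :=
  (tendsto_const_mul_atBot_of_neg (neg_neg_of_pos hδ)).1 <|
    Real.tendsto_exp_comp_nhds_zero.1 hF.tendsto_atTop_zero

end Growth

section LocalEntropy

open scoped NNReal

theorem ofReal_le_locTerm [MeasurableSpace X] {μ : Measure X} {B : Set X} {m : ℕ} (hm : m ≠ 0)
    {r : ℝ} (h : μ B ≤ ENNReal.ofReal (Real.exp (-(r * m)))) :
    ENNReal.ofReal r ≤ locTerm μ B m := by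
  rw [locTerm]
  split_ifs with hμB
  · exact le_top
  · have hpos : 0 < (μ B).toReal :=
      ENNReal.toReal_pos hμB (ne_top_of_le_ne_top ENNReal.ofReal_ne_top h)
    have hlog : Real.log (μ B).toReal ≤ -(r * m) :=
      (Real.log_le_iff_le_exp hpos).2 (ENNReal.toReal_le_of_le_ofReal (Real.exp_pos _).le h)
    refine ENNReal.ofReal_le_ofReal ((le_div_iff₀ (by positivity)).2 ?_)
    linarith

variable [Group G] [MetricSpace X] [MulAction G X] {F : ℕ → Finset G}

theorem ofReal_le_lowLoc [MeasurableSpace X] {μ : Measure X} {x : X} {ε s : ℝ} {C : ℝ≥0}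
    (hF : Tendsto (fun n => ((F n).card : ℝ)) atTop atTop) (hC : C ≠ 0)
    (h : ∀ᶠ n in atTop,
      μ (bowenBall (F n) x ε) ≤ ENNReal.ofReal (Real.exp (-s * (F n).card)) / C) :
    ENNReal.ofReal s ≤ lowLoc μ F x ε := by
  have hlim : Tendsto (fun n => ENNReal.ofReal (s + Real.log C / (F n).card)) atTop
      (𝓝 (ENNReal.ofReal s)) := by
    simpa using ENNReal.tendsto_ofReal ((hF.const_div_atTop (Real.log C)).const_add s)
  rw [← hlim.liminf_eq]
  refine liminf_le_liminf ?_
  filter_upwards [h, hF.eventually_gt_atTop 0] with n hn hcard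
  have hcard' : (F n).card ≠ 0 := mod_cast hcard.ne'
  refine ofReal_le_locTerm hcard' (hn.trans_eq ?_)
  have hexp : Real.exp (-((s + Real.log C / (F n).card) * (F n).card)) =
      Real.exp (-s * (F n).card) / C := by
    rw [add_mul, div_mul_cancel₀ _ hcard.ne', neg_add, ← neg_mul, Real.exp_add,
      Real.exp_neg (Real.log C), Real.exp_log (by positivity), div_eq_mul_inv]
  rw [hexp, ENNReal.ofReal_div_of_pos (by positivity), ENNReal.ofReal_coe_nnreal]

theorem le_lowLocEnt_of_forall_le_lowLoc [MeasurableSpace X] {μ : Measure X}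
    [IsProbabilityMeasure μ] {ε : ℝ} (hε : 0 < ε) {r : ℝ≥0∞} (h : ∀ x, r ≤ lowLoc μ F x ε) :
    r ≤ lowLocEnt μ F :=
  calc r = ∫⁻ _, r ∂μ := by simp
    _ ≤ lowLocEnt μ F := lintegral_mono fun x => (h x).trans (le_iSup₂_of_le ε hε le_rfl)

theorem exists_ballM_ne_zero_of_lt_bowenEnt {K : Set X} {s : ℝ}
    (hs : ENNReal.ofReal s < bowenEnt F K) : ∃ ε > 0, ∃ N, ballM F K N ε s ≠ 0 := by
  by_contra! hzero
  exact hs.not_ge (iInf₂_le s (by simpa [ballMtot, ballMN] using hzero))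

theorem exists_le_lowLocEnt_of_lt_bowenEnt [ContinuousConstSMul G X] [MeasurableSpace X]
    [BorelSpace X] {K : Set X} (hK : IsCompact K) {s s' : ℝ} (hss' : s < s')
    (hF : Summable fun n => Real.exp (-(s' - s) * (F n).card))
    (hs' : ENNReal.ofReal s' < bowenEnt F K) :
    ∃ μ : Measure X, IsProbabilityMeasure μ ∧ μ K = 1 ∧ ENNReal.ofReal s ≤ lowLocEnt μ F := by
  obtain ⟨ε, hε, N, hM⟩ := exists_ballM_ne_zero_of_lt_bowenEnt hs'
  have hMW := ballM_two_mul_le_mul_wtWset (K := K) (N := N) (half_pos hε) hF.tsum_ofReal_ne_top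
  rw [mul_div_cancel₀ ε two_ne_zero] at hMW
  have hW : 0 < wtWset F K N (ε / 2) s :=
    pos_iff_ne_zero.2 (right_ne_zero_of_mul (ne_bot_of_le_ne_bot hM hMW))
  obtain ⟨C, hC, hCW⟩ := ENNReal.lt_iff_exists_nnreal_btwn.1 hW
  have hC0 : C ≠ 0 := mod_cast hC.ne'
  obtain ⟨μ, hμ, hμK, hμball⟩ :=
    exists_isProbabilityMeasure_forall_measure_bowenBall_le hK hC0 hCW.le
  have hcard := tendsto_card_atTop_of_summable_exp (sub_pos.2 hss') hF
  exact ⟨μ, hμ, hμK, le_lowLocEnt_of_forall_le_lowLoc (half_pos hε) fun x =>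
    ofReal_le_lowLoc hcard hC0 ((eventually_ge_atTop N).mono (hμball x))⟩

end LocalEntropy

theorem bowenEnt_le_iSup_lowLocEnt_general [Group G] [MetricSpace X] [MulAction G X]
    [ContinuousConstSMul G X] [MeasurableSpace X] [BorelSpace X] (F : ℕ → Finset G)
    (hF : ∀ δ : ℝ, 0 < δ → Summable fun n => Real.exp (-δ * (F n).card))
    (K : Set X) (hK : IsCompact K) :
    (∀ r < bowenEnt F K, ∃ μ : Measure X, IsProbabilityMeasure μ ∧ μ K = 1 ∧
      r ≤ lowLocEnt μ F) ∧
    bowenEnt F K ≤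
      ⨆ (μ : Measure X) (_ : IsProbabilityMeasure μ) (_ : μ K = 1), lowLocEnt μ F := by
  have hexists (r : ℝ≥0∞) (hr : r < bowenEnt F K) :
      ∃ μ : Measure X, IsProbabilityMeasure μ ∧ μ K = 1 ∧ r ≤ lowLocEnt μ F := by
    obtain ⟨s', -, hrs', hs'⟩ := ENNReal.lt_iff_exists_real_btwn.1 hr
    have hss' : r.toReal < s' := ENNReal.toReal_lt_of_lt_ofReal hrs'
    rw [← ENNReal.ofReal_toReal hr.ne_top]
    exact exists_le_lowLocEnt_of_lt_bowenEnt hK hss' (hF _ (sub_pos.2 hss')) hs'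
  refine ⟨hexists, le_of_forall_lt_imp_le_of_dense fun r hr => ?_⟩
  obtain ⟨μ, hμ, hμK, hrμ⟩ := hexists r hr
  exact le_iSup_of_le μ (le_iSup₂_of_le hμ hμK hrμ)

/-- If `lim_n |F_n|/log n = ∞` and `K ⊆ X` is non-empty compact with
`h^B_top(K,{F_n}) > 0`, then for every `0 < s < h^B_top(K,{F_n})` there is a Borel
probability measure `μ` with `μ(K) = 1` and `h̲_μ^{loc}({F_n}) ≥ s`; consequently
`h^B_top(K,{F_n}) ≤ sup { h̲_μ^{loc}({F_n}) : μ(K) = 1 }`. -/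
theorem bowenEnt_le_iSup_lowLocEnt
    [Group G] [Countable G] [MetricSpace X] [CompactSpace X]
    [MulAction G X] [ContinuousConstSMul G X] [MeasurableSpace X] [BorelSpace X]
    (F : ℕ → Finset G) (hGrow : GrowthCond F)
    (K : Set X) (hK : K.Nonempty) (hKc : IsCompact K)
    (hpos : 0 < bowenEnt F K) :
    (∀ s : ℝ, 0 < s → ENNReal.ofReal s < bowenEnt F K →
      ∃ μ : Measure X, IsProbabilityMeasure μ ∧ μ K = 1 ∧
        ENNReal.ofReal s ≤ lowLocEnt μ F) ∧
    bowenEnt F K ≤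
      ⨆ (μ : Measure X) (_ : IsProbabilityMeasure μ) (_ : μ K = 1), lowLocEnt μ F := by
  have h := bowenEnt_le_iSup_lowLocEnt_general F (fun _ => hGrow.summable_exp_neg_mul_card) K hKc
  exact ⟨fun _ _ => h.1 _, h.2⟩
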